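/- arXiv:1805.11855 — 2 statements merged into one kernel-verified Lean document; each statement's English description precedes it below -/
import Mathlib

section
/- Let n be a positive integer and let real parameters α₁, α₂, α₃, β₁, β₂, β₃ satisfy: (A1) 1+α₁+α₂+α₃ = β₁+β₂+β₃; (A2) 0 < α₂ < β₃ ≤ 2+α₁; (A3) 0 < α₃ < min(β₁, β₂); (A4) (1+α₁)α₂α₃ ≤ β₁β₂β₃. Define the terminating Saalschützian series Θₙ = Σ_{k=0}^{n} (−1)^k C(n,k) (n+α₁)_k (α₂)_k (α₃)_k / ((β₁)_k (β₂)_k (β₃)_k), where C(n,k) is the binomial coefficient. Then Θ₁ ≥ 0 and Θₙ > 0 for every integer n ≥ 2. -/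
/-- Pochhammer symbol `(a)_k = a (a+1) ⋯ (a+k-1)` for a real number `a`. -/
noncomputable def poch (a : ℝ) (k : ℕ) : ℝ := ∏ i ∈ Finset.range k, (a + i)

/-- The terminating Saalschützian series
`Θₙ = ₄F₃[−n, n+α₁, α₂, α₃; β₁, β₂, β₃]` at `1`. -/
noncomputable def Theta (α₁ α₂ α₃ β₁ β₂ β₃ : ℝ) (n : ℕ) : ℝ :=
  ∑ k ∈ Finset.range (n + 1),
    (-1 : ℝ) ^ k * (n.choose k) * poch ((n : ℝ) + α₁) k * poch α₂ k * poch α₃ k /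
      (poch β₁ k * poch β₂ k * poch β₃ k)

/-!
Put `γ = 1 + α₁ - β₃ ≥ -1`. Expanding `(n + α₁)_k (α₂)_k / (β₃)_k` by Euler's transformation and
summing the inner series by Pfaff–Saalschütz (Whipple's transformation) expresses
`(β₁)ₙ (β₂)ₙ Θₙ / n!` as the sum over `j + m = n` of
`(α₃)_j (β₃ - α₂)_j / (j! (β₃)_j) * (γ + m)_j * (β₁ - α₃)_m (β₂ - α₃)_m / m!`.
All factors are nonnegative except possibly `(γ + m)_j`, which is harmless when `γ ≥ 0`, or when
`γ = -1` and `n ≥ 2`. For `-1 < γ < 0` write `(γ + m)_j = (γ)ₙ / (γ)_m`: since `(γ)ₙ < 0` for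
`n ≥ 1`, the sign of `Θₙ` is opposite to that of the `n`-th coefficient `Wₙ` of
`₂F₁(α₃, β₃ - α₂; β₃; x) ₂F₁(β₁ - α₃, β₂ - α₃; γ; x)`. Differentiating this product shows that
`(n + 1) Wₙ₊₁ < hₙ Wₙ` with `hₙ = (α₃ + n)(β₃ - α₂ + n) / (β₃ + n) > 0`, so once `Wₙ ≤ 0` all
later coefficients are negative, and `W₁ ≤ 0` because `Θ₁ ≥ 0`.
-/

open Finset Finset.Nat
open scoped Nat

section Antidiagonal

lemma sum_antidiagonal_fst_eq_sum_antidiagonal_snd {A M : Type*} [AddMonoid A] [HasAntidiagonal A]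
    [AddCommMonoid M] (F : A → A → A → M) (n : A) :
    ∑ x ∈ antidiagonal n, ∑ y ∈ antidiagonal x.1, F y.1 y.2 x.2 =
      ∑ x ∈ antidiagonal n, ∑ y ∈ antidiagonal x.2, F x.1 y.1 y.2 := by
  rw [sum_sigma', sum_sigma']
  refine sum_nbij' (fun z => ⟨(z.2.1, z.2.2 + z.1.2), (z.2.2, z.1.2)⟩)
    (fun z => ⟨(z.1.1 + z.2.1, z.2.2), (z.1.1, z.2.1)⟩) ?_ ?_ ?_ ?_ fun _ _ => rfl
  all_goals
    rintro ⟨⟨a, b⟩, ⟨c, d⟩⟩ h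
    obtain ⟨rfl, rfl⟩ : _ ∧ _ := by simpa only [mem_sigma, HasAntidiagonal.mem_antidiagonal] using h
    simp [add_assoc]

/-- The interchange of summations behind Bailey's transform. -/
lemma sum_antidiagonal_mul_convolution {A R : Type*} [AddMonoid A] [HasAntidiagonal A]
    [CommSemiring R] (f : A → A → R) (u c : A → R) (n : A) :
    ∑ x ∈ antidiagonal n, f x.1 x.2 * ∑ y ∈ antidiagonal x.1, u y.1 * c y.2 =
      ∑ x ∈ antidiagonal n, u x.1 * ∑ y ∈ antidiagonal x.2, c y.1 * f (x.1 + y.1) y.2 := by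
  simp only [mul_sum]
  rw [← sum_antidiagonal_fst_eq_sum_antidiagonal_snd
    fun i l m => u i * (c l * f (i + l) m)]
  refine sum_congr rfl fun x _ => sum_congr rfl fun y hy => ?_
  rw [mem_antidiagonal.mp hy]
  ring

lemma sum_antidiagonal_succ_weighted {R : Type*} [NonAssocSemiring R] (f g : ℕ → ℕ → R) (n : ℕ) :
    ∑ x ∈ antidiagonal (n + 1), (x.1 * f x.1 x.2 + x.2 * g x.1 x.2) =
      ∑ x ∈ antidiagonal n,
        ((x.1 + 1) * f (x.1 + 1) x.2 + (x.2 + 1) * g x.1 (x.2 + 1)) := by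
  rw [sum_add_distrib, sum_add_distrib, sum_antidiagonal_succ (N := R),
    sum_antidiagonal_succ' (N := R)]
  simp

lemma sum_antidiagonal_mul_succ_lt {K : Type*} [CommRing K] [LinearOrder K] [IsStrictOrderedRing K]
    {u g s h : ℕ → K} (hu_zero : 0 < u 0) (hu_neg : ∀ m, u (m + 1) < 0) (hg : ∀ j, 0 < g j)
    (hus : ∀ m : ℕ, (m + 1) * u (m + 1) = s m * u m)
    (hgh : ∀ j : ℕ, (j + 1) * g (j + 1) = h j * g j)
    (hsh : ∀ j m, h (j + (m + 1)) < h j + s (m + 1)) (n : ℕ) :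
    (n + 1) * ∑ x ∈ antidiagonal (n + 1), g x.1 * u x.2 <
      h n * ∑ x ∈ antidiagonal n, g x.1 * u x.2 := by
  have hs_zero : s 0 < 0 := by
    have hu_one : s 0 * u 0 < 0 := by simpa [← hus 0] using hu_neg 0
    exact neg_of_mul_neg_left hu_one hu_zero.le
  have leibniz : (n + 1) * ∑ x ∈ antidiagonal (n + 1), g x.1 * u x.2 =
      ∑ x ∈ antidiagonal n, (h x.1 + s x.2) * (g x.1 * u x.2) := by
    have weights := sum_antidiagonal_succ_weighted
      (fun j m => g j * u m) (fun j m => g j * u m) n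
    rw [mul_sum]
    refine (sum_congr rfl fun x hx => ?_).trans (weights.trans (sum_congr rfl fun x _ => ?_))
    · have hx_cast : (x.1 : K) + x.2 = n + 1 := by exact_mod_cast mem_antidiagonal.mp hx
      rw [← hx_cast, add_mul]
    · linear_combination u x.2 * hgh x.1 + g x.1 * hus x.2
  rw [leibniz, mul_sum]
  refine sum_lt_sum_of_nonempty ⟨(0, n), by simp⟩ ?_
  rintro ⟨j, _ | m⟩ hx <;> obtain rfl : _ = n := mem_antidiagonal.mp hx
  · exact mul_lt_mul_of_pos_right (by simpa using hs_zero) (mul_pos (hg j) hu_zero)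
  · exact mul_lt_mul_of_neg_right (hsh j m) (mul_neg_of_pos_of_neg (hg j) (hu_neg m))

end Antidiagonal

section Pochhammer

@[simp]
lemma poch_zero (a : ℝ) : poch a 0 = 1 := by simp [poch]

lemma poch_succ (a : ℝ) (k : ℕ) : poch a (k + 1) = poch a k * (a + k) :=
  prod_range_succ _ _

lemma poch_add (a : ℝ) (k l : ℕ) : poch a (k + l) = poch a k * poch (a + k) l := by
  simp only [poch, prod_range_add, Nat.cast_add, add_assoc]

lemma poch_pos {a : ℝ} (ha : 0 < a) (k : ℕ) : 0 < poch a k :=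
  prod_pos fun _ _ => by positivity

lemma poch_nonneg {a : ℝ} (ha : 0 ≤ a) (k : ℕ) : 0 ≤ poch a k :=
  prod_nonneg fun _ _ => by positivity

lemma poch_succ_neg {a : ℝ} (h_lower : -1 < a) (h_upper : a < 0) (k : ℕ) : poch a (k + 1) < 0 := by
  rw [add_comm, poch_add, Nat.cast_one]
  exact mul_neg_of_neg_of_pos (by simpa [poch] using h_upper) (poch_pos (by linarith) k)

lemma poch_ne_zero_of_le {a : ℝ} {k n : ℕ} (hkn : k ≤ n) (h : poch a n ≠ 0) : poch a k ≠ 0 := by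
  obtain ⟨l, rfl⟩ := Nat.exists_eq_add_of_le hkn
  exact left_ne_zero_of_mul (poch_add a k l ▸ h)

lemma poch_add_natCast_ne_zero {a : ℝ} {k l : ℕ} (h : poch a (k + l) ≠ 0) :
    poch (a + k) l ≠ 0 :=
  right_ne_zero_of_mul (poch_add a k l ▸ h)

lemma poch_neg_natCast_eq_zero {m k : ℕ} (hmk : m < k) : poch (-m) k = 0 :=
  prod_eq_zero (mem_range.mpr hmk) (neg_add_cancel _)

lemma poch_one_sub_sub (a : ℝ) (k : ℕ) : poch (1 - k - a) k = (-1) ^ k * poch a k := by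
  have sign : (-1 : ℝ) ^ k = ∏ _i ∈ range k, (-1 : ℝ) := by simp
  rw [poch, ← prod_range_reflect, poch, sign, ← prod_mul_distrib]
  refine prod_congr rfl fun i hi => ?_
  have hi' : i + 1 ≤ k := mem_range.mp hi
  rw [Nat.sub_sub, add_comm 1 i, Nat.cast_sub hi']
  push_cast
  ring

end Pochhammer

section Gauss

/-- The coefficient of `x ^ k` in the Gauss hypergeometric series `₂F₁(a, b; c; x)`, with the
convention that it is `0` once `(c)_k` vanishes. -/
noncomputable def gaussCoeff (a b c : ℝ) (k : ℕ) : ℝ :=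
  poch a k * poch b k / (k ! * poch c k)

lemma gaussCoeff_zero (a b c : ℝ) : gaussCoeff a b c 0 = 1 := by simp [gaussCoeff]

lemma succ_mul_gaussCoeff_succ (a b c : ℝ) (k : ℕ) :
    (k + 1) * gaussCoeff a b c (k + 1) = (a + k) * (b + k) / (c + k) * gaussCoeff a b c k := by
  simp only [gaussCoeff, poch_succ, Nat.factorial_succ, Nat.cast_mul, Nat.cast_succ]
  field_simp

lemma succ_mul_add_mul_gaussCoeff_succ (a b : ℝ) {c : ℝ} {k : ℕ} (hck : c + k ≠ 0) :
    (k + 1) * (c + k) * gaussCoeff a b c (k + 1) = (a + k) * (b + k) * gaussCoeff a b c k := by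
  rw [mul_right_comm, succ_mul_gaussCoeff_succ]
  field_simp

lemma gaussCoeff_pos {a b c : ℝ} (ha : 0 < a) (hb : 0 < b) (hc : 0 < c) (k : ℕ) :
    0 < gaussCoeff a b c k :=
  div_pos (mul_pos (poch_pos ha k) (poch_pos hb k)) (mul_pos (by positivity) (poch_pos hc k))

lemma gaussCoeff_succ_neg {a b c : ℝ} (ha : 0 < a) (hb : 0 < b) (hc_lower : -1 < c)
    (hc_upper : c < 0) (k : ℕ) : gaussCoeff a b c (k + 1) < 0 :=
  div_neg_of_pos_of_neg (mul_pos (poch_pos ha _) (poch_pos hb _))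
    (mul_neg_of_pos_of_neg (by positivity) (poch_succ_neg hc_lower hc_upper k))

lemma gaussCoeff_euler_convolution_succ {a b c : ℝ} {n : ℕ} (hc : poch c (n + 1) ≠ 0) :
    ((n : ℝ) + 1) * (c + n) * ∑ x ∈ antidiagonal (n + 1),
        gaussCoeff a b c x.1 * (poch (c - a - b) x.2 / (x.2)!) =
      (c - a + n) * (c - b + n) * ∑ x ∈ antidiagonal n,
        gaussCoeff a b c x.1 * (poch (c - a - b) x.2 / (x.2)!) := by
  set u := gaussCoeff a b c
  set v : ℕ → ℝ := fun m => poch (c - a - b) m / (m !)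
  have hu : ∀ j ≤ n, ((j : ℝ) + 1) * (c + j) * u (j + 1) = (a + j) * (b + j) * u j := by
    intro j hj
    exact succ_mul_add_mul_gaussCoeff_succ a b (right_ne_zero_of_mul
      (poch_succ c j ▸ poch_ne_zero_of_le (by omega) hc))
  have hv (m : ℕ) : ((m : ℝ) + 1) * v (m + 1) = (c - a - b + m) * v m := by
    simp only [v, poch_succ, Nat.factorial_succ, Nat.cast_mul, Nat.cast_succ]
    field_simp
  -- `(j + m) (c + j + m - 1)` splits into multiples of `j (c + j - 1)` and of `m`,
  -- the weights that the recurrences of `u` and `v` absorb.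
  have weights := sum_antidiagonal_succ_weighted
    (fun j m => (c + j - 1) * (u j * v m)) (fun j m => (c + 2 * j + m - 1) * (u j * v m)) n
  rw [mul_sum, mul_sum]
  refine (sum_congr rfl fun x hx => ?_).trans (weights.trans (sum_congr rfl fun x hx => ?_))
  · have hx_cast : (x.1 : ℝ) + x.2 = n + 1 := by exact_mod_cast mem_antidiagonal.mp hx
    rw [← hx_cast, show c + (n : ℝ) = c + (x.1 + x.2 - 1) by rw [hx_cast]; ring]
    ring
  · rw [← mem_antidiagonal.mp hx]
    push_cast
    linear_combination v x.2 * hu x.1 (HasAntidiagonal.antidiagonal.fst_le hx) +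
      (c + 2 * x.1 + x.2) * u x.1 * hv x.2

/-- Euler's transformation `(1 - x) ^ (a + b - c) ₂F₁(a, b; c; x) = ₂F₁(c - a, c - b; c; x)`, read
off at `x ^ n`. -/
lemma gaussCoeff_euler_transformation (a b : ℝ) {c : ℝ} {n : ℕ} (hc : poch c n ≠ 0) :
    ∑ x ∈ antidiagonal n, gaussCoeff a b c x.1 * (poch (c - a - b) x.2 / (x.2)!) =
      gaussCoeff (c - a) (c - b) c n := by
  induction n with
  | zero => simp [gaussCoeff_zero]
  | succ n ih =>
    have hcn : c + n ≠ 0 := right_ne_zero_of_mul (poch_succ c n ▸ hc)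
    have hn : (n : ℝ) + 1 ≠ 0 := by positivity
    refine mul_left_cancel₀ (mul_ne_zero hn hcn) ?_
    rw [gaussCoeff_euler_convolution_succ hc, ih (poch_ne_zero_of_le n.le_succ hc),
      succ_mul_add_mul_gaussCoeff_succ _ _ hcn]

lemma pfaff_saalschutz {a b c d : ℝ} {n : ℕ} (hcd : c + d + n = 1 + a + b)
    (hc : poch c n ≠ 0) (hd : poch d n ≠ 0) :
    ∑ x ∈ antidiagonal n, (-1) ^ x.1 * gaussCoeff a b c x.1 / ((x.2)! * poch d x.1) =
      gaussCoeff (c - a) (d - a) c n / poch d n := by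
  have reflect_cb : poch (c - b) n = (-1) ^ n * poch (d - a) n := by
    rw [← poch_one_sub_sub]
    congr 1
    linarith
  calc
    _ = ∑ x ∈ antidiagonal n,
        (-1) ^ n / poch d n * (gaussCoeff a b c x.1 * (poch (c - a - b) x.2 / (x.2)!)) := by
      refine sum_congr rfl fun x hx => ?_
      obtain rfl := mem_antidiagonal.mp hx
      have reflect_cab : poch (c - a - b) x.2 = (-1) ^ x.2 * poch (d + x.1) x.2 := by
        rw [← poch_one_sub_sub]
        congr 1
        push_cast at hcd
        linarith
      have hd₁ := poch_ne_zero_of_le (Nat.le_add_right _ _) hd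
      have hd₂ := poch_add_natCast_ne_zero hd
      rw [reflect_cab, poch_add, pow_add]
      field_simp
      rw [pow_right_comm, neg_one_sq, one_pow, mul_one]
    _ = (-1) ^ n / poch d n * gaussCoeff (c - a) (c - b) c n := by
      rw [← mul_sum, gaussCoeff_euler_transformation a b hc]
    _ = _ := by
      rw [gaussCoeff, gaussCoeff, reflect_cb]
      field_simp
      rw [pow_right_comm, neg_one_sq, one_pow, one_mul]

lemma pfaff_saalschutz_shifted {a w b₁ b₂ : ℝ} {i m : ℕ}
    (hb : b₁ + b₂ + (i + m) = 1 + a + w)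
    (hb₁ : poch b₁ (i + m) ≠ 0) (hb₂ : poch b₂ (i + m) ≠ 0) :
    ∑ y ∈ antidiagonal m, poch w y.1 / (y.1)! *
        ((-1) ^ (i + y.1) * poch a (i + y.1) /
          ((y.2)! * (poch b₁ (i + y.1) * poch b₂ (i + y.1)))) =
      (-1) ^ i * poch a i * (poch (b₁ - a) m * poch (b₂ - a) m / m !) /
        (poch b₁ (i + m) * poch b₂ (i + m)) := by
  calc
    _ = (-1) ^ i * poch a i / (poch b₁ i * poch b₂ i) * ∑ y ∈ antidiagonal m,
        (-1) ^ y.1 * gaussCoeff (a + i) w (b₁ + i) y.1 / ((y.2)! * poch (b₂ + i) y.1) := by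
      rw [mul_sum]
      refine sum_congr rfl fun y _ => ?_
      simp only [gaussCoeff, poch_add _ i, pow_add]
      ring
    _ = _ := by
      rw [pfaff_saalschutz (by linarith) (poch_add_natCast_ne_zero hb₁)
        (poch_add_natCast_ne_zero hb₂), add_sub_add_right_eq_sub, add_sub_add_right_eq_sub,
        gaussCoeff, poch_add b₁, poch_add b₂]
      ring

lemma add_mul_add_div_add_le {a b c x y : ℝ} (hac : a ≤ c) (hbc : b ≤ c) (hx : 0 < c + x)
    (hy : 0 ≤ y) :
    (a + (x + y)) * (b + (x + y)) / (c + (x + y)) ≤ (a + x) * (b + x) / (c + x) + y := by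
  have excess_nonneg : 0 ≤ y * ((c - a) * (c - b)) :=
    mul_nonneg hy (mul_nonneg (sub_nonneg.mpr hac) (sub_nonneg.mpr hbc))
  rw [div_add' _ _ _ hx.ne', div_le_div_iff₀ (by linarith) hx]
  linear_combination excess_nonneg

lemma lt_add_mul_add_div_add {p q c x : ℝ} (hp : 0 < p) (hq : 0 < q) (hc : c < 0)
    (hx : 0 < c + x) : x < (p + x) * (q + x) / (c + x) := by
  have hx_pos : 0 < x := by linarith
  rw [lt_div_iff₀ hx]
  nlinarith [mul_pos hp hq, mul_pos hp hx_pos, mul_pos hq hx_pos, mul_pos_of_neg_of_neg hc hc]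

lemma gaussCoeff_convolution_succ_neg {a b c p q r : ℝ} (ha : 0 < a) (hb : 0 < b)
    (hac : a ≤ c) (hbc : b ≤ c) (hp : 0 < p) (hq : 0 < q) (hr_lower : -1 < r) (hr_upper : r < 0)
    {n : ℕ} (hn : ∑ x ∈ antidiagonal n, gaussCoeff a b c x.1 * gaussCoeff p q r x.2 ≤ 0) :
    ∑ x ∈ antidiagonal (n + 1), gaussCoeff a b c x.1 * gaussCoeff p q r x.2 < 0 := by
  have hc : 0 < c := ha.trans_le hac
  have ratio_lt : ∀ j m : ℕ,
      (a + (j + (m + 1) : ℕ)) * (b + (j + (m + 1) : ℕ)) / (c + (j + (m + 1) : ℕ)) <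
        (a + j) * (b + j) / (c + j) +
          (p + (m + 1 : ℕ)) * (q + (m + 1 : ℕ)) / (r + (m + 1 : ℕ)) := by
    intro j m
    have hrm : 0 < r + (m + 1 : ℕ) := by
      push_cast
      linarith [m.cast_nonneg (α := ℝ)]
    rw [Nat.cast_add j]
    exact (add_mul_add_div_add_le hac hbc (by positivity) (Nat.cast_nonneg _)).trans_lt
      (add_lt_add_right (lt_add_mul_add_div_add hp hq hr_upper hrm) _)
  have step := sum_antidiagonal_mul_succ_lt (by simp [gaussCoeff_zero])
    (gaussCoeff_succ_neg hp hq hr_lower hr_upper) (gaussCoeff_pos ha hb hc)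
    (succ_mul_gaussCoeff_succ p q r) (succ_mul_gaussCoeff_succ a b c) ratio_lt n
  exact neg_of_mul_neg_right
    (step.trans_le (mul_nonpos_of_nonneg_of_nonpos (by positivity) hn)) (by positivity)

end Gauss

section Theta

lemma Theta_one (α₁ α₂ α₃ β₁ β₂ β₃ : ℝ) :
    Theta α₁ α₂ α₃ β₁ β₂ β₃ 1 = 1 - (1 + α₁) * α₂ * α₃ / (β₁ * β₂ * β₃) := by
  simp only [Theta, poch, sum_range_succ, sum_range_zero, prod_range_succ, prod_range_zero,
    Nat.choose_zero_right, Nat.choose_self, Nat.cast_zero, Nat.cast_one]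
  ring

lemma Theta_eq_sum_antidiagonal (α₁ α₂ α₃ β₁ β₂ β₃ : ℝ) (n : ℕ) :
    Theta α₁ α₂ α₃ β₁ β₂ β₃ n = n ! * ∑ x ∈ antidiagonal n,
      (-1) ^ x.1 * poch α₃ x.1 / ((x.2)! * (poch β₁ x.1 * poch β₂ x.1)) *
        gaussCoeff (n + α₁) α₂ β₃ x.1 := by
  rw [Theta, ← Nat.succ_eq_add_one, ← sum_antidiagonal_eq_sum_range_succ_mk fun x : ℕ × ℕ =>
    (-1 : ℝ) ^ x.1 * (n.choose x.1) * poch (n + α₁) x.1 * poch α₂ x.1 * poch α₃ x.1 /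
      (poch β₁ x.1 * poch β₂ x.1 * poch β₃ x.1), mul_sum]
  refine sum_congr rfl fun x hx => ?_
  have choose_eq : (n.choose x.1 : ℝ) = n ! / ((x.1)! * (x.2)!) := by
    rw [← mem_antidiagonal.mp hx, Nat.cast_add_choose]
  rw [choose_eq, gaussCoeff]
  ring

/-- Whipple's transformation of a terminating Saalschützian `₄F₃`. -/
lemma Theta_mul_poch_mul_poch {α₁ α₂ α₃ β₁ β₂ β₃ : ℝ} {n : ℕ}
    (h_saal : 1 + α₁ + α₂ + α₃ = β₁ + β₂ + β₃)
    (h₁ : poch β₁ n ≠ 0) (h₂ : poch β₂ n ≠ 0) (h₃ : poch β₃ n ≠ 0) :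
    Theta α₁ α₂ α₃ β₁ β₂ β₃ n * (poch β₁ n * poch β₂ n) = n ! * ∑ x ∈ antidiagonal n,
      gaussCoeff α₃ (β₃ - α₂) β₃ x.1 * poch (1 + α₁ - β₃ + x.2) x.1 *
        (poch (β₁ - α₃) x.2 * poch (β₂ - α₃) x.2 / (x.2)!) := by
  have euler : ∀ k ≤ n, gaussCoeff (n + α₁) α₂ β₃ k = ∑ y ∈ antidiagonal k,
      gaussCoeff (β₃ - (n + α₁)) (β₃ - α₂) β₃ y.1 *
        (poch (n + α₁ + α₂ - β₃) y.2 / (y.2)!) := by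
    intro k hk
    have transformed := gaussCoeff_euler_transformation (β₃ - (n + α₁)) (β₃ - α₂)
      (poch_ne_zero_of_le hk h₃)
    rw [sub_sub_cancel, sub_sub_cancel] at transformed
    rw [← transformed]
    ring_nf
  have bailey := sum_antidiagonal_mul_convolution
    (fun k m => (-1) ^ k * poch α₃ k / (m ! * (poch β₁ k * poch β₂ k)))
    (gaussCoeff (β₃ - (n + α₁)) (β₃ - α₂) β₃) (fun l => poch (n + α₁ + α₂ - β₃) l / l !) n
  rw [Theta_eq_sum_antidiagonal, sum_congr rfl fun x hx => by
    rw [euler x.1 (HasAntidiagonal.antidiagonal.fst_le hx)], bailey, mul_assoc, sum_mul]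
  congr 1
  refine sum_congr rfl fun x hx => ?_
  obtain rfl := mem_antidiagonal.mp hx
  have reflect : poch (β₃ - ((x.1 + x.2 : ℕ) + α₁)) x.1 =
      (-1) ^ x.1 * poch (1 + α₁ - β₃ + x.2) x.1 := by
    rw [← poch_one_sub_sub]
    push_cast
    ring_nf
  rw [pfaff_saalschutz_shifted (by push_cast; linarith) h₁ h₂, gaussCoeff, reflect,
    gaussCoeff]
  field_simp
  rw [pow_right_comm, neg_one_sq, one_pow, one_mul]

lemma Theta_mul_poch_mul_poch_eq_gaussCoeff {α₁ α₂ α₃ β₁ β₂ β₃ : ℝ} {n : ℕ}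
    (h_saal : 1 + α₁ + α₂ + α₃ = β₁ + β₂ + β₃)
    (h₁ : poch β₁ n ≠ 0) (h₂ : poch β₂ n ≠ 0) (h₃ : poch β₃ n ≠ 0)
    (hγ : poch (1 + α₁ - β₃) n ≠ 0) :
    Theta α₁ α₂ α₃ β₁ β₂ β₃ n * (poch β₁ n * poch β₂ n) =
      n ! * poch (1 + α₁ - β₃) n * ∑ x ∈ antidiagonal n,
        gaussCoeff α₃ (β₃ - α₂) β₃ x.1 *
          gaussCoeff (β₁ - α₃) (β₂ - α₃) (1 + α₁ - β₃) x.2 := by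
  rw [Theta_mul_poch_mul_poch h_saal h₁ h₂ h₃, mul_assoc (n ! : ℝ)]
  congr 1
  rw [mul_sum]
  refine sum_congr rfl fun x hx => ?_
  obtain rfl := mem_antidiagonal.mp hx
  have hγ₂ := poch_ne_zero_of_le (Nat.le_add_left _ _) hγ
  rw [add_comm x.1, poch_add, gaussCoeff, gaussCoeff]
  field_simp

section Positivity

variable {α₁ α₂ α₃ β₁ β₂ β₃ : ℝ} {n : ℕ}

lemma Theta_pos_of_poch_nonneg (h_saal : 1 + α₁ + α₂ + α₃ = β₁ + β₂ + β₃) (hα₃ : 0 < α₃)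
    (hα₃β₁ : α₃ < β₁) (hα₃β₂ : α₃ < β₂) (hβ₃ : 0 < β₃) (hα₂β₃ : α₂ < β₃)
    (h_poch : ∀ x ∈ antidiagonal n, 0 ≤ poch (1 + α₁ - β₃ + x.2) x.1) :
    0 < Theta α₁ α₂ α₃ β₁ β₂ β₃ n := by
  have hβ₁n := poch_pos (hα₃.trans hα₃β₁) n
  have hβ₂n := poch_pos (hα₃.trans hα₃β₂) n
  have hg := gaussCoeff_pos hα₃ (sub_pos.mpr hα₂β₃) hβ₃
  have hw (m : ℕ) : 0 < poch (β₁ - α₃) m * poch (β₂ - α₃) m / m ! :=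
    div_pos (mul_pos (poch_pos (sub_pos.mpr hα₃β₁) m) (poch_pos (sub_pos.mpr hα₃β₂) m))
      (by positivity)
  refine pos_of_mul_pos_left ?_ (mul_pos hβ₁n hβ₂n).le
  rw [Theta_mul_poch_mul_poch h_saal hβ₁n.ne' hβ₂n.ne' (poch_pos hβ₃ n).ne']
  refine mul_pos (by positivity) (sum_pos' (fun x hx => ?_) ⟨(0, n), by simp, ?_⟩)
  · exact mul_nonneg (mul_nonneg (hg x.1).le (h_poch x hx)) (hw x.2).le
  · simpa [gaussCoeff_zero] using hw n

lemma Theta_succ_pos_of_Theta_nonneg_of_lt (h_saal : 1 + α₁ + α₂ + α₃ = β₁ + β₂ + β₃)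
    (hα₃ : 0 < α₃) (hα₃β₁ : α₃ < β₁) (hα₃β₂ : α₃ < β₂) (hα₂β₃ : α₂ < β₃)
    (hβ₃_lt : β₃ < 2 + α₁) (hβ₃_gt : 1 + α₁ < β₃) (hn : n ≠ 0)
    (h_nonneg : 0 ≤ Theta α₁ α₂ α₃ β₁ β₂ β₃ n) :
    0 < Theta α₁ α₂ α₃ β₁ β₂ β₃ (n + 1) := by
  have hβ₁ := poch_pos (hα₃.trans hα₃β₁)
  have hβ₂ := poch_pos (hα₃.trans hα₃β₂)
  have hβ₃ : 0 < β₃ := by linarith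
  have hγ := poch_succ_neg (a := 1 + α₁ - β₃) (by linarith) (by linarith)
  have hTheta (k : ℕ) := Theta_mul_poch_mul_poch_eq_gaussCoeff (n := k + 1) h_saal
    (hβ₁ _).ne' (hβ₂ _).ne' (poch_pos hβ₃ _).ne' (hγ k).ne
  have hfac (k : ℕ) : (((k + 1)! : ℕ) : ℝ) * poch (1 + α₁ - β₃) (k + 1) < 0 :=
    mul_neg_of_pos_of_neg (by positivity) (hγ k)
  have hsum : ∑ x ∈ antidiagonal n, gaussCoeff α₃ (β₃ - α₂) β₃ x.1 *
      gaussCoeff (β₁ - α₃) (β₂ - α₃) (1 + α₁ - β₃) x.2 ≤ 0 := by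
    obtain ⟨k, rfl⟩ := Nat.exists_eq_succ_of_ne_zero hn
    refine nonpos_of_mul_nonneg_right ?_ (hfac k)
    rw [← hTheta]
    exact mul_nonneg h_nonneg (mul_pos (hβ₁ _) (hβ₂ _)).le
  refine pos_of_mul_pos_left ?_ (mul_pos (hβ₁ (n + 1)) (hβ₂ (n + 1))).le
  rw [hTheta]
  exact mul_pos_of_neg_of_neg (hfac n) (gaussCoeff_convolution_succ_neg hα₃
    (by linarith) (by linarith) (by linarith) (by linarith) (by linarith) (by linarith)
    (by linarith) hsum)

lemma Theta_succ_pos_of_Theta_nonneg (h_saal : 1 + α₁ + α₂ + α₃ = β₁ + β₂ + β₃)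
    (hβ₃ : 0 < β₃) (hα₂β₃ : α₂ < β₃) (hβ₃_le : β₃ ≤ 2 + α₁)
    (hα₃ : 0 < α₃) (hα₃β₁ : α₃ < β₁) (hα₃β₂ : α₃ < β₂) (hn : n ≠ 0)
    (h_nonneg : 0 ≤ Theta α₁ α₂ α₃ β₁ β₂ β₃ n) :
    0 < Theta α₁ α₂ α₃ β₁ β₂ β₃ (n + 1) := by
  rcases le_or_gt β₃ (1 + α₁) with hγ_nonneg | hγ_neg
  · refine Theta_pos_of_poch_nonneg h_saal hα₃ hα₃β₁ hα₃β₂ hβ₃ hα₂β₃ fun x _ => poch_nonneg ?_ _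
    exact add_nonneg (sub_nonneg.mpr hγ_nonneg) (Nat.cast_nonneg _)
  rcases hβ₃_le.lt_or_eq with hβ₃_lt | hβ₃_eq
  · exact Theta_succ_pos_of_Theta_nonneg_of_lt h_saal hα₃ hα₃β₁ hα₃β₂ hα₂β₃ hβ₃_lt hγ_neg hn
      h_nonneg
  · refine Theta_pos_of_poch_nonneg h_saal hα₃ hα₃β₁ hα₃β₂ hβ₃ hα₂β₃ ?_
    have hγ : 1 + α₁ - β₃ = -(1 : ℕ) := by
      push_cast
      linarith
    rw [hγ]
    rintro ⟨j, _ | m⟩ hx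
    · have hj : j = n + 1 := mem_antidiagonal.mp hx
      simpa using (poch_neg_natCast_eq_zero (show 1 < j by omega)).ge
    · exact poch_nonneg (by simp) _

end Positivity

end Theta

theorem stmt0_general (α₁ α₂ α₃ β₁ β₂ β₃ : ℝ)
    (hA1 : 1 + α₁ + α₂ + α₃ = β₁ + β₂ + β₃)
    (hA2a : 0 < β₃) (hA2b : α₂ < β₃) (hA2c : β₃ ≤ 2 + α₁)
    (hA3a : 0 < α₃) (hA3b : α₃ < min β₁ β₂)
    (hA4 : (1 + α₁) * α₂ * α₃ ≤ β₁ * β₂ * β₃) :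
    0 ≤ Theta α₁ α₂ α₃ β₁ β₂ β₃ 1 ∧
      ∀ n : ℕ, 2 ≤ n → 0 < Theta α₁ α₂ α₃ β₁ β₂ β₃ n := by
  obtain ⟨hα₃β₁, hα₃β₂⟩ := lt_min_iff.mp hA3b
  have hTheta_one : 0 ≤ Theta α₁ α₂ α₃ β₁ β₂ β₃ 1 := by
    have hβ : 0 < β₁ * β₂ * β₃ :=
      mul_pos (mul_pos (hA3a.trans hα₃β₁) (hA3a.trans hα₃β₂)) hA2a
    rwa [Theta_one, sub_nonneg, div_le_one hβ]
  have step (n : ℕ) (hn : n ≠ 0) :=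
    Theta_succ_pos_of_Theta_nonneg hA1 hA2a hA2b hA2c hA3a hα₃β₁ hα₃β₂ hn
  refine ⟨hTheta_one, fun n hn => ?_⟩
  induction n, hn using Nat.le_induction with
  | base => exact step 1 one_ne_zero hTheta_one
  | succ n hn ih => exact step n (by omega) ih.le

theorem stmt0 (α₁ α₂ α₃ β₁ β₂ β₃ : ℝ)
    (hA1 : 1 + α₁ + α₂ + α₃ = β₁ + β₂ + β₃)
    (hA2a : 0 < α₂) (hA2b : α₂ < β₃) (hA2c : β₃ ≤ 2 + α₁)
    (hA3a : 0 < α₃) (hA3b : α₃ < min β₁ β₂)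
    (hA4 : (1 + α₁) * α₂ * α₃ ≤ β₁ * β₂ * β₃) :
    0 ≤ Theta α₁ α₂ α₃ β₁ β₂ β₃ 1 ∧
      ∀ n : ℕ, 2 ≤ n → 0 < Theta α₁ α₂ α₃ β₁ β₂ β₃ n :=
  stmt0_general α₁ α₂ α₃ β₁ β₂ β₃ hA1 (hA2a.trans hA2b) hA2b hA2c hA3a hA3b hA4
end

section
/- Let real numbers α₁, α₂, α₃, β₁, β₂, β₃ satisfy the Saalschützian condition 1+α₁+α₂+α₃ = β₁+β₂+β₃, with β₁ ≠ 0 and β₂ ≠ 0, and set Ω₁ = (1+α₁−β₃)(β₃−α₂) + (1+α₁)α₂(β₁−α₃)(β₂−α₃)/(β₁β₂). Then Ω₁ = (β₁+β₂−α₃)[β₁β₂β₃ − (1+α₁)α₂α₃]/(β₁β₂). In particular, if additionally 0 < α₃ < min(β₁, β₂) and (1+α₁)α₂α₃ ≤ β₁β₂β₃, then Ω₁ ≥ 0. -/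
/-!
Since `(x - z) * (y - z) = x * y - (x + y - z) * z`, the two products in `Ω₁`, namely
`(a₁ - b₃) * (a₂ - b₃)` and `(b₁ - a₃) * (b₂ - a₃)` with `a₁ = 1 + α₁`, involve the factors
`a₁ + a₂ - b₃` and `b₁ + b₂ - a₃`. The Saalschützian condition says precisely that these
coincide; after the terms `a₁ * a₂` cancel, what remains of `Ω₁` is a multiple of this common
factor.
-/

theorem sub_mul_sub_right_eq {R : Type*} [CommRing R] (x y z : R) :
    (x - z) * (y - z) = x * y - (x + y - z) * z := by
  ring

section WhippleOmega

variable {K : Type*} [Field K]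

/-- The first-order quantity `Ω₁` that Whipple's transformation attaches to the series
`₄F₃[-1, a₁, a₂, a₃; b₁, b₂, b₃]`. The numerator parameter `a₁` stands for the paper's `1 + α₁`,
so that the Saalschützian condition reads `a₁ + a₂ + a₃ = b₁ + b₂ + b₃`. -/
def whippleOmega (a₁ a₂ a₃ b₁ b₂ b₃ : K) : K :=
  (a₁ - b₃) * (b₃ - a₂) + a₁ * a₂ * (b₁ - a₃) * (b₂ - a₃) / (b₁ * b₂)

variable {a₁ a₂ a₃ b₁ b₂ b₃ : K}

theorem whippleOmega_eq (hS : a₁ + a₂ + a₃ = b₁ + b₂ + b₃) (hb₁ : b₁ ≠ 0) (hb₂ : b₂ ≠ 0) :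
    whippleOmega a₁ a₂ a₃ b₁ b₂ b₃ =
      (b₁ + b₂ - a₃) * (b₁ * b₂ * b₃ - a₁ * a₂ * a₃) / (b₁ * b₂) := by
  have common_factor : a₁ + a₂ - b₃ = b₁ + b₂ - a₃ := by linear_combination hS
  calc whippleOmega a₁ a₂ a₃ b₁ b₂ b₃
      = -((a₁ - b₃) * (a₂ - b₃)) + a₁ * a₂ * ((b₁ - a₃) * (b₂ - a₃)) / (b₁ * b₂) := by
        rw [whippleOmega]; ring
    _ = -(a₁ * a₂ - (b₁ + b₂ - a₃) * b₃)
          + a₁ * a₂ * (b₁ * b₂ - (b₁ + b₂ - a₃) * a₃) / (b₁ * b₂) := by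
        rw [sub_mul_sub_right_eq a₁, sub_mul_sub_right_eq b₁, common_factor]
    _ = (b₁ + b₂ - a₃) * (b₁ * b₂ * b₃ - a₁ * a₂ * a₃) / (b₁ * b₂) := by
        field_simp
        ring

variable [LinearOrder K] [IsStrictOrderedRing K]

theorem whippleOmega_nonneg (hS : a₁ + a₂ + a₃ = b₁ + b₂ + b₃) (hb : 0 < b₁ * b₂)
    (ha₃ : a₃ ≤ b₁ + b₂) (hab : a₁ * a₂ * a₃ ≤ b₁ * b₂ * b₃) :
    0 ≤ whippleOmega a₁ a₂ a₃ b₁ b₂ b₃ := by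
  rw [whippleOmega_eq hS (left_ne_zero_of_mul hb.ne') (right_ne_zero_of_mul hb.ne')]
  exact div_nonneg (mul_nonneg (sub_nonneg.mpr ha₃) (sub_nonneg.mpr hab)) hb.le

theorem stmt1_general (hS : a₁ + a₂ + a₃ = b₁ + b₂ + b₃) (hb₁ : b₁ ≠ 0) (hb₂ : b₂ ≠ 0) :
    whippleOmega a₁ a₂ a₃ b₁ b₂ b₃ =
        (b₁ + b₂ - a₃) * (b₁ * b₂ * b₃ - a₁ * a₂ * a₃) / (b₁ * b₂) ∧
      (0 < b₁ * b₂ → a₃ ≤ b₁ + b₂ → a₁ * a₂ * a₃ ≤ b₁ * b₂ * b₃ →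
        0 ≤ whippleOmega a₁ a₂ a₃ b₁ b₂ b₃) :=
  ⟨whippleOmega_eq hS hb₁ hb₂, whippleOmega_nonneg hS⟩

end WhippleOmega

theorem stmt1 (α₁ α₂ α₃ β₁ β₂ β₃ : ℝ)
    (hS : 1 + α₁ + α₂ + α₃ = β₁ + β₂ + β₃)
    (hb1 : β₁ ≠ 0) (hb2 : β₂ ≠ 0) :
    (1 + α₁ - β₃) * (β₃ - α₂) + (1 + α₁) * α₂ * (β₁ - α₃) * (β₂ - α₃) / (β₁ * β₂) =
      (β₁ + β₂ - α₃) * (β₁ * β₂ * β₃ - (1 + α₁) * α₂ * α₃) / (β₁ * β₂) ∧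
    (0 < α₃ → α₃ < min β₁ β₂ → (1 + α₁) * α₂ * α₃ ≤ β₁ * β₂ * β₃ →
      0 ≤ (1 + α₁ - β₃) * (β₃ - α₂) + (1 + α₁) * α₂ * (β₁ - α₃) * (β₂ - α₃) / (β₁ * β₂)) := by
  refine (stmt1_general hS hb1 hb2).imp_right fun nonneg hα₃ hlt ↦ ?_
  obtain ⟨h₁, h₂⟩ := lt_min_iff.mp hlt
  exact nonneg (mul_pos (hα₃.trans h₁) (hα₃.trans h₂)) (by linarith)
end
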